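/- Let n ≥ 2, let A be the Cartan matrix of type A_n, and let ι be an admissible sequence in I = {1,…,n} adapted to A. Then Ξ_ι = Tab_{A,ι}, i.e. the set of all linear forms obtained by applying finitely many operators S_k to the coordinate functions x_{j_0} coincides exactly with the set of column tableaux of type A. -/

import Mathlib

noncomputable section

/-- The coordinate linear form `x_k` (as a coefficient vector). -/
def xc (k : ℕ) : ℕ → ℚ := fun l => if l = k then 1 else 0

/-- Cartan matrix of type `A_n`. -/
def cartanA (_n : ℕ) (i j : ℕ) : ℤ :=
  if i = j then 2 else if i + 1 = j ∨ j + 1 = i then -1 else 0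

/-- Cartan matrix of type `B_n`. -/
def cartanB (n : ℕ) (i j : ℕ) : ℤ :=
  if i = j then 2
  else if i = n ∧ j = n - 1 then -2
  else if i + 1 = j ∨ j + 1 = i then -1 else 0

/-- Cartan matrix of type `C_n`. -/
def cartanC (n : ℕ) (i j : ℕ) : ℤ :=
  if i = j then 2
  else if i = n - 1 ∧ j = n then -2
  else if i + 1 = j ∨ j + 1 = i then -1 else 0

/-- Cartan matrix of type `D_n`. -/
def cartanD (n : ℕ) (i j : ℕ) : ℤ :=
  if i = j then 2
  else if (i = n - 1 ∧ j = n) ∨ (i = n ∧ j = n - 1) then 0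
  else if (i + 1 = j ∨ j + 1 = i) ∨ (i = n ∧ j = n - 2) ∨ (i = n - 2 ∧ j = n) then -1
  else 0

/-- `ι` (with positions indexed by `k ≥ 1`) takes values in `{1,…,n}`, has no two equal
consecutive entries, and every index occurs infinitely often. -/
def Admissible (n : ℕ) (ι : ℕ → ℕ) : Prop :=
  (∀ k, 1 ≤ k → 1 ≤ ι k ∧ ι k ≤ n) ∧
  (∀ k, 1 ≤ k → ι k ≠ ι (k + 1)) ∧
  (∀ i, 1 ≤ i → i ≤ n → ∀ N, ∃ k, N ≤ k ∧ ι k = i)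

/-- `k^+`: the next position after `k` carrying the same letter. -/
def kplus (ι : ℕ → ℕ) (k : ℕ) : ℕ := sInf {l | k < l ∧ ι l = ι k}

/-- `k^-`: the previous position (`≥ 1`) carrying the same letter, `0` if none. -/
def kminus (ι : ℕ → ℕ) (k : ℕ) : ℕ := sSup {l | 0 < l ∧ l < k ∧ ι l = ι k}

/-- The linear form `β_k` (with `β_0 = 0`). -/
def beta (A : ℕ → ℕ → ℤ) (ι : ℕ → ℕ) (k : ℕ) : ℕ → ℚ :=
  if k = 0 then 0
  else xc k + (∑ j ∈ Finset.Ioo k (kplus ι k), (A (ι k) (ι j) : ℚ) • xc j) + xc (kplus ι k)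

/-- The piecewise-linear operator `S_k`. -/
def Sop (A : ℕ → ℕ → ℤ) (ι : ℕ → ℕ) (k : ℕ) (φ : ℕ → ℚ) : ℕ → ℚ :=
  if 0 < φ k then φ - φ k • beta A ι k
  else φ - φ k • beta A ι (kminus ι k)

/-- Membership in `Ξ_ι`: forms obtained from some `x_{j_0}` by finitely many operators `S_k`. -/
inductive XiMem (A : ℕ → ℕ → ℤ) (ι : ℕ → ℕ) : (ℕ → ℚ) → Prop
  | base (k : ℕ) (hk : 1 ≤ k) : XiMem A ι (xc k)
  | step (k : ℕ) (hk : 1 ≤ k) (φ : ℕ → ℚ) (h : XiMem A ι φ) : XiMem A ι (Sop A ι k φ)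

/-- The set `Ξ_ι`. -/
def Xi (A : ℕ → ℕ → ℤ) (ι : ℕ → ℕ) : Set (ℕ → ℚ) := { φ | XiMem A ι φ }

/-- Forms obtained from a set `g` of generators by finitely many operators `S_k`. -/
inductive XiMemFrom (A : ℕ → ℕ → ℤ) (ι : ℕ → ℕ) (g : Set (ℕ → ℚ)) : (ℕ → ℚ) → Prop
  | base (φ : ℕ → ℚ) (h : φ ∈ g) : XiMemFrom A ι g φ
  | step (k : ℕ) (hk : 1 ≤ k) (φ : ℕ → ℚ) (h : XiMemFrom A ι g φ) :
      XiMemFrom A ι g (Sop A ι k φ)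

/-- `ι` is adapted to the Cartan matrix `A`: for `i ≠ j` with `a_{i,j} ≠ 0`, consecutive
members of the subsequence of `ι` consisting of the letters `i`, `j` are distinct. -/
def Adapted (n : ℕ) (A : ℕ → ℕ → ℤ) (ι : ℕ → ℕ) : Prop :=
  ∀ i j, 1 ≤ i → i ≤ n → 1 ≤ j → j ≤ n → i ≠ j → A i j ≠ 0 →
    ∀ k l, 1 ≤ k → k < l → (ι k = i ∨ ι k = j) → (ι l = i ∨ ι l = j) →
      (∀ m, k < m → m < l → ι m ≠ i ∧ ι m ≠ j) → ι k ≠ ι l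

/-- Position of the first occurrence of the letter `i` in `ι`. -/
def firstOcc (ι : ℕ → ℕ) (i : ℕ) : ℕ := sInf {k | 1 ≤ k ∧ ι k = i}

/-- `p_{i,j} = 1` iff the first occurrence of `i` precedes the first occurrence of `j`. -/
def pval (ι : ℕ → ℕ) (i j : ℕ) : ℕ := if firstOcc ι i < firstOcc ι j then 1 else 0

/-- The function `P(k)` for types A, B, C (and `P(k) = 0` for `k > n`, `k ≤ 1`). -/
def PABC (ι : ℕ → ℕ) (n k : ℕ) : ℕ :=
  if k ≤ n then ∑ t ∈ Finset.Icc 2 k, pval ι t (t - 1) else 0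

/-- The function `P(k)` for type D. -/
def PD (ι : ℕ → ℕ) (n k : ℕ) : ℕ :=
  if k = n then (∑ t ∈ Finset.Icc 2 (n - 2), pval ι t (t - 1)) + pval ι n (n - 2)
  else if k ≤ n then ∑ t ∈ Finset.Icc 2 k, pval ι t (t - 1) else 0

/-- `occPos ι j s`: the position of the `s`-th occurrence of the letter `j` in `ι`
(`0` for `s = 0`). -/
def occPos (ι : ℕ → ℕ) (j : ℕ) : ℕ → ℕ
  | 0 => 0
  | s + 1 => sInf {k | occPos ι j s < k ∧ ι k = j}

/-- The double-indexed coordinate form `x_{s,j}`, with the conventions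
`x_{s,0} = x_{s,n+1} = 0` and `x_{s,j} = 0` for `s ≤ 0`. -/
def xsj (ι : ℕ → ℕ) (n : ℕ) (s : ℤ) (j : ℕ) : ℕ → ℚ :=
  if 1 ≤ s ∧ 1 ≤ j ∧ j ≤ n then xc (occPos ι j s.toNat) else 0

/-- The double-indexed form `β_{s,j}`. -/
def betasj (A : ℕ → ℕ → ℤ) (ι : ℕ → ℕ) (s : ℤ) (j : ℕ) : ℕ → ℚ :=
  beta A ι (occPos ι j s.toNat)

/-- The double-indexed operator `S_{m,j}`. -/
def Ssj (A : ℕ → ℕ → ℤ) (ι : ℕ → ℕ) (m j : ℕ) (φ : ℕ → ℚ) : ℕ → ℚ :=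
  Sop A ι (occPos ι j m) φ

/- Entries of the ordered sets `J_X` are encoded as natural numbers:
an unbarred entry `j ∈ {1,…,n}` is encoded as `j`, a barred entry `j̄` is
encoded as `2n+1-j` (so that `n̄ = n+1, …, 1̄ = 2n` and the total order of
`J_B = J_C` is the numerical order), and the extra symbol `ovl(n+1)` of
types C and D is encoded as `0`. -/

/-- The box of type A. -/
def boxA (ι : ℕ → ℕ) (n : ℕ) (s : ℤ) (j : ℕ) : ℕ → ℚ :=
  xsj ι n (s + (PABC ι n j : ℤ)) j - xsj ι n (s + (PABC ι n (j - 1) : ℤ) + 1) (j - 1)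

/-- The box of type B. -/
def boxB (ι : ℕ → ℕ) (n : ℕ) (s : ℤ) (e : ℕ) : ℕ → ℚ :=
  if e ≤ n then
    xsj ι n (s + (PABC ι n e : ℤ)) e - xsj ι n (s + (PABC ι n (e - 1) : ℤ) + 1) (e - 1)
  else
    xsj ι n (s + (PABC ι n (2 * n - e) : ℤ) + (n : ℤ) - ((2 * n + 1 - e : ℕ) : ℤ) + 1)
        (2 * n - e)
      - xsj ι n (s + (PABC ι n (2 * n + 1 - e) : ℤ) + (n : ℤ) - ((2 * n + 1 - e : ℕ) : ℤ) + 1)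
          (2 * n + 1 - e)

/-- The box of type C (`ovl(n+1)` encoded as `0`). -/
def boxC (ι : ℕ → ℕ) (n : ℕ) (s : ℤ) (e : ℕ) : ℕ → ℚ :=
  if e = 0 then xsj ι n (s + (PABC ι n n : ℤ)) n
  else if e < n then
    xsj ι n (s + (PABC ι n e : ℤ)) e - xsj ι n (s + (PABC ι n (e - 1) : ℤ) + 1) (e - 1)
  else if e = n then
    (2 : ℚ) • xsj ι n (s + (PABC ι n n : ℤ)) n
      - xsj ι n (s + (PABC ι n (n - 1) : ℤ) + 1) (n - 1)
  else if e = n + 1 then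
    xsj ι n (s + (PABC ι n (n - 1) : ℤ) + 1) (n - 1)
      - (2 : ℚ) • xsj ι n (s + (PABC ι n n : ℤ) + 1) n
  else
    xsj ι n (s + (PABC ι n (2 * n - e) : ℤ) + (n : ℤ) - ((2 * n + 1 - e : ℕ) : ℤ) + 1)
        (2 * n - e)
      - xsj ι n (s + (PABC ι n (2 * n + 1 - e) : ℤ) + (n : ℤ) - ((2 * n + 1 - e : ℕ) : ℤ) + 1)
          (2 * n + 1 - e)

/-- The box of type D (`ovl(n+1)` encoded as `0`, `n̄` as `n+1`, `ovl(n-1)` as `n+2`). -/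
def boxD (ι : ℕ → ℕ) (n : ℕ) (s : ℤ) (e : ℕ) : ℕ → ℚ :=
  if e = 0 then xsj ι n (s + (PD ι n n : ℤ)) n
  else if e ≤ n - 2 then
    xsj ι n (s + (PD ι n e : ℤ)) e - xsj ι n (s + (PD ι n (e - 1) : ℤ) + 1) (e - 1)
  else if e = n - 1 then
    xsj ι n (s + (PD ι n (n - 1) : ℤ)) (n - 1) + xsj ι n (s + (PD ι n n : ℤ)) n
      - xsj ι n (s + (PD ι n (n - 2) : ℤ) + 1) (n - 2)
  else if e = n then
    xsj ι n (s + (PD ι n n : ℤ)) n - xsj ι n (s + (PD ι n (n - 1) : ℤ) + 1) (n - 1)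
  else if e = n + 1 then
    xsj ι n (s + (PD ι n (n - 1) : ℤ)) (n - 1) - xsj ι n (s + (PD ι n n : ℤ) + 1) n
  else if e = n + 2 then
    xsj ι n (s + (PD ι n (n - 2) : ℤ) + 1) (n - 2)
      - xsj ι n (s + (PD ι n (n - 1) : ℤ) + 1) (n - 1)
      - xsj ι n (s + (PD ι n n : ℤ) + 1) n
  else
    xsj ι n (s + (PD ι n (2 * n - e) : ℤ) + (n : ℤ) - ((2 * n + 1 - e : ℕ) : ℤ)) (2 * n - e)
      - xsj ι n (s + (PD ι n (2 * n + 1 - e) : ℤ) + (n : ℤ) - ((2 * n + 1 - e : ℕ) : ℤ))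
          (2 * n + 1 - e)

/-- The column tableau `[j_1,…,j_k]_s = Σ_{i=1}^k box_{s+k-i}(j_i)`. -/
def tab (box : ℤ → ℕ → ℕ → ℚ) (s : ℤ) (k : ℕ) (j : ℕ → ℕ) : ℕ → ℚ :=
  ∑ i ∈ Finset.Icc 1 k, box (s + (k : ℤ) - (i : ℤ)) (j i)

/-- The set `Tab_{A,ι}`. -/
def TabA (ι : ℕ → ℕ) (n : ℕ) : Set (ℕ → ℚ) :=
  { T | ∃ (k : ℕ) (s : ℤ) (j : ℕ → ℕ),
      1 ≤ k ∧ k ≤ n ∧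
      (∀ i, 1 ≤ i → i ≤ k → 1 ≤ j i ∧ j i ≤ n + 1) ∧
      (∀ i, 1 ≤ i → i < k → j i < j (i + 1)) ∧
      1 - (PABC ι n k : ℤ) ≤ s ∧
      T = tab (boxA ι n) s k j }

/-- `|·|` on encoded entries of `J_B = J_C`. -/
def absJ (n e : ℕ) : ℕ := if e ≤ n then e else 2 * n + 1 - e

/-- The set `Tab_{B,ι}`. -/
def TabB (ι : ℕ → ℕ) (n : ℕ) : Set (ℕ → ℚ) :=
  { T | ∃ (k : ℕ) (s : ℤ) (j : ℕ → ℕ),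
      1 ≤ k ∧ k ≤ n ∧
      (∀ i, 1 ≤ i → i ≤ k → 1 ≤ j i ∧ j i ≤ 2 * n) ∧
      (∀ i, 1 ≤ i → i < k → j i < j (i + 1)) ∧
      (k = n → ∀ l m, 1 ≤ l → l < m → m ≤ k → absJ n (j l) ≠ absJ n (j m)) ∧
      1 - (PABC ι n k : ℤ) ≤ s ∧
      T = tab (boxB ι n) s k j }

/-- Defining conditions of `Tab_{C,ι}` on the data `(k,s,j)`. -/
def TabCcond (ι : ℕ → ℕ) (n : ℕ) (k : ℕ) (s : ℤ) (j : ℕ → ℕ) : Prop :=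
  (1 ≤ k ∧ k ≤ n - 1 ∧
    (∀ i, 1 ≤ i → i ≤ k → 1 ≤ j i ∧ j i ≤ 2 * n) ∧
    (∀ i, 1 ≤ i → i < k → j i < j (i + 1)) ∧
    1 - (PABC ι n k : ℤ) ≤ s)
  ∨
  (j 1 = 0 ∧ 1 ≤ k ∧ k ≤ n + 1 ∧
    (∀ i, 2 ≤ i → i ≤ k → n + 1 ≤ j i ∧ j i ≤ 2 * n) ∧
    (∀ i, 2 ≤ i → i < k → j i < j (i + 1)) ∧
    1 - (PABC ι n n : ℤ) ≤ s)

/-- The set `Tab_{C,ι}`. -/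
def TabC (ι : ℕ → ℕ) (n : ℕ) : Set (ℕ → ℚ) :=
  { T | ∃ k s j, TabCcond ι n k s j ∧ T = tab (boxC ι n) s k j }

/-- The partial order on (encoded) `J_D`: `a ≤ b` iff `a = b`, or `a < b` numerically and
`(a,b)` is not the incomparable pair `(n, n̄)`. -/
def leD (n a b : ℕ) : Prop := a = b ∨ (a < b ∧ ¬(a = n ∧ b = n + 1))

/-- Defining conditions of `Tab_{D,ι}` on the data `(k,s,j)`. -/
def TabDcond (ι : ℕ → ℕ) (n : ℕ) (k : ℕ) (s : ℤ) (j : ℕ → ℕ) : Prop :=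
  (1 ≤ k ∧ k ≤ n - 2 ∧
    (∀ i, 1 ≤ i → i ≤ k → 1 ≤ j i ∧ j i ≤ 2 * n) ∧
    (∀ i, 1 ≤ i → i < k → ¬ leD n (j (i + 1)) (j i)) ∧
    1 - (PD ι n k : ℤ) ≤ s)
  ∨
  (j 1 = 0 ∧ 1 ≤ k ∧ k ≤ n + 1 ∧
    (∀ i, 2 ≤ i → i ≤ k → n + 1 ≤ j i ∧ j i ≤ 2 * n) ∧
    (∀ i, 2 ≤ i → i < k → j i < j (i + 1)) ∧
    (k % 2 = 0 → 1 - (PD ι n (n - 1) : ℤ) ≤ s) ∧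
    (k % 2 = 1 → 1 - (PD ι n n : ℤ) ≤ s))

/-- The set `Tab_{D,ι}`. -/
def TabD (ι : ℕ → ℕ) (n : ℕ) : Set (ℕ → ℚ) :=
  { T | ∃ k s j, TabDcond ι n k s j ∧ T = tab (boxD ι n) s k j }

end

/-!
Write `x_k = x_{t,c}` for the `t`-th occurrence of the letter `c`. Alternation determines which
occurrences of `c - 1` and `c + 1` lie between `k` and `k^+`, and this gives
`β_k = B_m(c) - B_m(c + 1)` with `m = t - P(c)`. The coefficient of `x_k` in a tableau is `1` if the
tableau contains the box `B_m(c)`, minus `1` if it contains `B_{m-1}(c + 1)`. Hence `S_k` either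
fixes the tableau, or raises an entry `c` to `c + 1`, or lowers an entry `c + 1` to `c`, and does so
only when the column stays strictly increasing; so `Tab_{A,ι}` is closed under all `S_k`.
Conversely, lowering entries one at a time takes any tableau to
`[1,…,k]_s = x_{s+P(k),k}`, and every lowering is undone by some raising `S_k`. The inequalities
`P(k) - P(q) ≤ k - q` and `s ≥ 1 - P(k)` ensure that the position at which to raise exists.
-/

section Occurrences

variable {ι : ℕ → ℕ} {i j : ℕ}

theorem Admissible.infinite_setOf_eq {n : ℕ} (hadm : Admissible n ι) (hj : 1 ≤ j ∧ j ≤ n) :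
    {k | ι k = j}.Infinite :=
  Nat.frequently_atTop_iff_infinite.1 (Filter.frequently_atTop.2 (hadm.2.2 j hj.1 hj.2))

-- Admitting position `0` makes the enumerations agree also at `s = 0`, where `occPos` is `0`.
theorem occPos_eq_nth (hj : {k | ι k = j}.Infinite) (s : ℕ) :
    occPos ι j s = Nat.nth (fun k => k = 0 ∨ ι k = j) s := by
  have hp : {k | k = 0 ∨ ι k = j}.Infinite := hj.mono fun _ => Or.inr
  induction s with
  | zero => exact (Nat.nth_zero_of_zero (Or.inl rfl)).symm
  | succ s ih =>
    rw [occPos, ih, Nat.nth_eq_sInf _ (s + 1)]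
    refine congrArg (sInf : Set ℕ → ℕ) (Set.ext fun k => ⟨?_, ?_⟩)
    · exact fun ⟨hsk, hk⟩ => ⟨Or.inr hk, fun r hr =>
        ((Nat.nth_strictMono hp).monotone (Nat.lt_succ_iff.1 hr)).trans_lt hsk⟩
    · exact fun ⟨hk, hlt⟩ => ⟨hlt s s.lt_succ_self,
        hk.resolve_left (Nat.zero_le _ |>.trans_lt (hlt s s.lt_succ_self)).ne'⟩

theorem occPos_strictMono (hj : {k | ι k = j}.Infinite) : StrictMono (occPos ι j) := by
  rw [funext (occPos_eq_nth hj)]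
  exact Nat.nth_strictMono (hj.mono fun _ => Or.inr)

theorem occPos_pos (hj : {k | ι k = j}.Infinite) {s : ℕ} (hs : 0 < s) : 0 < occPos ι j s :=
  occPos_strictMono hj hs

theorem apply_occPos (hj : {k | ι k = j}.Infinite) {s : ℕ} (hs : 0 < s) :
    ι (occPos ι j s) = j := by
  have hmem := Nat.nth_mem_of_infinite (p := fun k => k = 0 ∨ ι k = j) (hj.mono fun _ => Or.inr) s
  rw [← occPos_eq_nth hj] at hmem
  exact hmem.resolve_left (occPos_pos hj hs).ne'

theorem exists_occPos_eq (hj : {k | ι k = j}.Infinite) {k : ℕ} (hk : 0 < k) (hkj : ι k = j) :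
    ∃ s, 0 < s ∧ occPos ι j s = k := by
  classical
  have hs := (occPos_eq_nth hj _).trans
    (Nat.nth_count (p := fun k => k = 0 ∨ ι k = j) (Or.inr hkj))
  refine ⟨_, Nat.pos_of_ne_zero fun h0 => ?_, hs⟩
  rw [h0] at hs
  exact hk.ne hs

theorem occPos_inj (hi : {k | ι k = i}.Infinite) (hj : {k | ι k = j}.Infinite) {s t : ℕ}
    (hs : 0 < s) (ht : 0 < t) : occPos ι i s = occPos ι j t ↔ i = j ∧ s = t := by
  refine ⟨fun h => ?_, fun ⟨hij, hst⟩ => hij ▸ hst ▸ rfl⟩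
  obtain rfl : i = j := by rw [← apply_occPos hi hs, h, apply_occPos hj ht]
  exact ⟨rfl, (occPos_strictMono hi).injective h⟩

theorem occPos_ne_occPos (hi : {k | ι k = i}.Infinite) (hj : {k | ι k = j}.Infinite)
    (hij : i ≠ j) {s t : ℕ} (hs : 0 < s) (ht : 0 < t) : occPos ι i s ≠ occPos ι j t :=
  fun h => hij ((occPos_inj hi hj hs ht).1 h).1

theorem kplus_occPos (hj : {k | ι k = j}.Infinite) {s : ℕ} (hs : 0 < s) :
    kplus ι (occPos ι j s) = occPos ι j (s + 1) := by
  rw [kplus, apply_occPos hj hs, occPos]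

theorem kminus_occPos (hj : {k | ι k = j}.Infinite) (s : ℕ) :
    kminus ι (occPos ι j (s + 1)) = occPos ι j s := by
  rw [kminus, apply_occPos hj s.succ_pos]
  have le_of_lt_succ : ∀ l ∈ {l | 0 < l ∧ l < occPos ι j (s + 1) ∧ ι l = j},
      l ≤ occPos ι j s := by
    rintro l ⟨hl, hlt, hlj⟩
    obtain ⟨r, -, rfl⟩ := exists_occPos_eq hj hl hlj
    exact (occPos_strictMono hj).monotone
      (Nat.lt_succ_iff.1 ((occPos_strictMono hj).lt_iff_lt.1 hlt))
  rcases s.eq_zero_or_pos with rfl | hs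
  · exact Nat.le_zero.1 (csSup_le' le_of_lt_succ)
  · exact IsGreatest.csSup_eq
      ⟨⟨occPos_pos hj hs, occPos_strictMono hj s.lt_succ_self, apply_occPos hj hs⟩, le_of_lt_succ⟩

end Occurrences

section Alternation

variable {ι : ℕ → ℕ} {i j : ℕ}

/-- The subsequence of `ι` consisting of the letters `i` and `j` alternates between them; this is
the condition that `Adapted` imposes on every pair of letters with nonzero Cartan entry. -/
def Alternates (ι : ℕ → ℕ) (i j : ℕ) : Prop :=
  ∀ k l, 1 ≤ k → k < l → (ι k = i ∨ ι k = j) → (ι l = i ∨ ι l = j) →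
    (∀ m, k < m → m < l → ι m ≠ i ∧ ι m ≠ j) → ι k ≠ ι l

theorem Alternates.symm (h : Alternates ι i j) : Alternates ι j i :=
  fun k l hk hkl hιk hιl hm =>
    h k l hk hkl hιk.symm hιl.symm fun m hkm hml => (hm m hkm hml).symm

theorem Alternates.exists_occPos_between (h : Alternates ι i j) (hi : {k | ι k = i}.Infinite)
    (hj : {k | ι k = j}.Infinite) {s : ℕ} (hs : 0 < s) :
    ∃ t, occPos ι i s < occPos ι j t ∧ occPos ι j t < occPos ι i (s + 1) := by
  by_contra! hnone
  have his := apply_occPos hi hs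
  have his' := apply_occPos hi s.succ_pos
  refine h _ _ (occPos_pos hi hs) (occPos_strictMono hi s.lt_succ_self) (Or.inl his)
    (Or.inl his') (fun m hsm hms => ⟨fun hm => ?_, fun hm => ?_⟩) (his.trans his'.symm)
  · exact hms.not_ge (Nat.sInf_le ⟨hsm, hm⟩)
  · obtain ⟨t, -, rfl⟩ := exists_occPos_eq hj (Nat.zero_le _ |>.trans_lt hsm) hm
    exact hms.not_ge (hnone t hsm)

theorem pval_add_pval_swap (hi : {k | ι k = i}.Infinite) (hj : {k | ι k = j}.Infinite)
    (hij : i ≠ j) : pval ι i j + pval ι j i = 1 := by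
  have hne : firstOcc ι i ≠ firstOcc ι j := occPos_ne_occPos hi hj hij one_pos one_pos
  unfold pval
  split_ifs <;> omega

theorem pval_le_one (ι : ℕ → ℕ) (i j : ℕ) : pval ι i j ≤ 1 := by
  unfold pval
  split_ifs <;> omega

theorem Alternates.occPos_interlace (h : Alternates ι i j) (hij : i ≠ j)
    (hi : {k | ι k = i}.Infinite) (hj : {k | ι k = j}.Infinite) (s : ℕ) :
    occPos ι i (s + pval ι i j) < occPos ι j (s + 1) ∧
      occPos ι j (s + 1) < occPos ι i (s + pval ι i j + 1) := by
  have hmi := occPos_strictMono hi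
  have hmj := occPos_strictMono hj
  have lt_next {s : ℕ} (hs : 0 < s + pval ι i j)
      (hlt : occPos ι j s ≤ occPos ι i (s + pval ι i j)) :
      occPos ι j (s + 1) < occPos ι i (s + pval ι i j + 1) := by
    obtain ⟨t, hst, hts⟩ := h.exists_occPos_between hi hj hs
    exact (hmj.monotone (hmj.lt_iff_lt.1 (hlt.trans_lt hst))).trans_lt hts
  induction s with
  | zero =>
    by_cases hfirst : occPos ι i 1 < occPos ι j 1
    · have hp : pval ι i j = 1 := if_pos hfirst
      exact ⟨by simpa [hp] using hfirst, lt_next (by omega) (Nat.zero_le _)⟩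
    · have hp : pval ι i j = 0 := if_neg hfirst
      rw [hp]
      exact ⟨occPos_pos hj one_pos,
        (occPos_ne_occPos hi hj hij one_pos one_pos).lt_of_le' (not_lt.1 hfirst)⟩
  | succ s ih =>
    have hadd : s + 1 + pval ι i j = s + pval ι i j + 1 := by omega
    refine ⟨?_, lt_next (by omega) (hadd ▸ ih.2.le)⟩
    obtain ⟨r, hsr, hrs⟩ := h.symm.exists_occPos_between hj hi s.succ_pos
    rw [hadd]
    exact (hmi.monotone (hmi.lt_iff_lt.1 (ih.1.trans hsr))).trans_lt hrs

theorem Alternates.occPos_lt_occPos_succ_iff (h : Alternates ι i j) (hij : i ≠ j)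
    (hi : {k | ι k = i}.Infinite) (hj : {k | ι k = j}.Infinite) {s t : ℕ} :
    occPos ι i t < occPos ι j (s + 1) ↔ t ≤ s + pval ι i j := by
  obtain ⟨hlt, hgt⟩ := h.occPos_interlace hij hi hj s
  have hmi := occPos_strictMono hi
  exact ⟨fun ht => Nat.lt_succ_iff.1 (hmi.lt_iff_lt.1 (ht.trans hgt)),
    fun ht => (hmi.monotone ht).trans_lt hlt⟩

theorem Alternates.occPos_between_iff (h : Alternates ι i j) (hij : i ≠ j)
    (hi : {k | ι k = i}.Infinite) (hj : {k | ι k = j}.Infinite) {s t : ℕ} (hs : 0 < s)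
    (ht : 0 < t) :
    occPos ι j s < occPos ι i t ∧ occPos ι i t < occPos ι j (s + 1) ↔ s + pval ι i j = t := by
  obtain ⟨s, rfl⟩ := Nat.exists_eq_succ_of_ne_zero hs.ne'
  have hne := occPos_ne_occPos hi hj hij ht s.succ_pos
  have hlt : occPos ι j (s + 1) < occPos ι i t ↔ ¬ t ≤ s + pval ι i j := by
    rw [← h.occPos_lt_occPos_succ_iff hij hi hj, not_lt, hne.symm.le_iff_lt]
  rw [hlt, h.occPos_lt_occPos_succ_iff hij hi hj]
  omega

end Alternation

section Coordinates

variable {n : ℕ} {ι : ℕ → ℕ}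

theorem Admissible.exists_mem_occPos_eq (hadm : Admissible n ι) {k : ℕ} (hk : 0 < k) :
    ∃ i t, (1 ≤ i ∧ i ≤ n) ∧ 0 < t ∧ occPos ι i t = k :=
  have hi := hadm.1 k hk
  have ⟨t, ht, htk⟩ := exists_occPos_eq (hadm.infinite_setOf_eq hi) hk rfl
  ⟨ι k, t, hi, ht, htk⟩

theorem Admissible.form_ext (hadm : Admissible n ι) {φ ψ : ℕ → ℚ} (h0 : φ 0 = ψ 0)
    (h : ∀ i t, (1 ≤ i ∧ i ≤ n) → 0 < t → φ (occPos ι i t) = ψ (occPos ι i t)) : φ = ψ := by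
  funext k
  rcases k.eq_zero_or_pos with rfl | hk
  · exact h0
  · obtain ⟨i, t, hi, ht, rfl⟩ := hadm.exists_mem_occPos_eq hk
    exact h i t hi ht

theorem xsj_eq_zero_of_not_mem {j : ℕ} (hj : ¬ (1 ≤ j ∧ j ≤ n)) (s : ℤ) : xsj ι n s j = 0 :=
  if_neg fun h => hj h.2

theorem xsj_natCast {j t : ℕ} (hj : 1 ≤ j ∧ j ≤ n) (ht : 0 < t) :
    xsj ι n t j = xc (occPos ι j t) := by
  rw [xsj, if_pos ⟨by omega, hj⟩, Int.toNat_natCast]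

theorem Admissible.xsj_apply_zero (hadm : Admissible n ι) (s : ℤ) (j : ℕ) :
    xsj ι n s j 0 = 0 := by
  unfold xsj
  split_ifs with h
  · exact if_neg (occPos_pos (hadm.infinite_setOf_eq h.2) (by omega)).ne
  · rfl

theorem Admissible.xsj_apply_occPos (hadm : Admissible n ι) (s : ℤ) (j : ℕ) {i t : ℕ}
    (hi : 1 ≤ i ∧ i ≤ n) (ht : 0 < t) :
    xsj ι n s j (occPos ι i t) = if j = i ∧ s = t then 1 else 0 := by
  unfold xsj
  split_ifs with hsj heq heq
  · obtain ⟨rfl, rfl⟩ := heq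
    exact if_pos rfl
  · refine if_neg fun h => heq ?_
    rw [occPos_inj (hadm.infinite_setOf_eq hi) (hadm.infinite_setOf_eq hsj.2) ht (by omega)] at h
    omega
  · omega
  · rfl

theorem beta_apply (A : ℕ → ℕ → ℤ) (ι : ℕ → ℕ) {k : ℕ} (hk : 0 < k) (l : ℕ) :
    beta A ι k l = (if l = k then 1 else 0)
      + (if k < l ∧ l < kplus ι k then (A (ι k) (ι l) : ℚ) else 0)
      + (if l = kplus ι k then 1 else 0) := by
  simp only [beta, hk.ne', if_false, Pi.add_apply, Finset.sum_apply, Pi.smul_apply, xc,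
    smul_eq_mul, mul_ite, mul_one, mul_zero, Finset.sum_ite_eq, Finset.mem_Ioo]

theorem Adapted.alternates {A : ℕ → ℕ → ℤ} (hadap : Adapted n A ι) {i j : ℕ}
    (hi : 1 ≤ i ∧ i ≤ n) (hj : 1 ≤ j ∧ j ≤ n) (hij : i ≠ j) (hA : A i j ≠ 0) :
    Alternates ι i j :=
  hadap i j hi.1 hi.2 hj.1 hj.2 hij hA

theorem beta_occPos {A : ℕ → ℕ → ℤ} (hadm : Admissible n ι) (hadap : Adapted n A ι) {c t : ℕ}
    (hc : 1 ≤ c ∧ c ≤ n) (ht : 0 < t) :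
    beta A ι (occPos ι c t) = xsj ι n t c + xsj ι n (t + 1) c +
      ∑ i ∈ (Finset.Icc 1 n).erase c, (A c i : ℚ) • xsj ι n (t + pval ι i c) i := by
  have hcinf := hadm.infinite_setOf_eq hc
  have hpos := occPos_pos hcinf ht
  apply hadm.form_ext
  · rw [beta_apply A ι hpos, kplus_occPos hcinf ht]
    simp [hadm.xsj_apply_zero, hpos.ne, (occPos_pos hcinf t.succ_pos).ne]
  · intro i r hi hr
    have hiinf := hadm.infinite_setOf_eq hi
    rw [beta_apply A ι hpos, kplus_occPos hcinf ht]
    simp only [Pi.add_apply, Finset.sum_apply, Pi.smul_apply, smul_eq_mul,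
      hadm.xsj_apply_occPos _ _ hi hr, occPos_inj hiinf hcinf hr ht,
      occPos_inj hiinf hcinf hr t.succ_pos, apply_occPos hiinf hr, apply_occPos hcinf ht]
    have hmiddle : (if occPos ι c t < occPos ι i r ∧ occPos ι i r < occPos ι c (t + 1)
          then (A c i : ℚ) else 0) =
        ∑ i' ∈ (Finset.Icc 1 n).erase c,
          (A c i' : ℚ) * if i' = i ∧ (t : ℤ) + pval ι i' c = r then 1 else 0 := by
      rcases eq_or_ne i c with rfl | hic
      · rw [if_neg fun h => ?_, Finset.sum_eq_zero fun i' hi' => ?_]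
        · rw [if_neg fun h => Finset.ne_of_mem_erase hi' h.1, mul_zero]
        · have := (occPos_strictMono hiinf).lt_iff_lt.1 h.1
          have := (occPos_strictMono hiinf).lt_iff_lt.1 h.2
          omega
      · rw [Finset.sum_eq_single i (fun i' _ hne => by simp [hne])
          fun h => absurd (by simp [hic, hi]) h]
        rcases eq_or_ne (A c i) 0 with hA | hA
        · simp [hA]
        · have halt := (hadap.alternates hc hi hic.symm hA).symm
          simp only [halt.occPos_between_iff hic hiinf hcinf ht hr, true_and, mul_ite, mul_one,
            mul_zero]
          norm_cast
    rw [hmiddle, add_right_comm]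
    congr 2 <;> congr 1 <;> grind

end Coordinates

section Boxes

variable {n : ℕ} {ι : ℕ → ℕ}

theorem PABC_succ {c : ℕ} (hc : 1 ≤ c) (hcn : c + 1 ≤ n) :
    PABC ι n (c + 1) = PABC ι n c + pval ι (c + 1) c := by
  rw [PABC, PABC, if_pos hcn, if_pos (by omega), Finset.sum_Icc_succ_top (by omega),
    Nat.add_sub_cancel]

theorem PABC_le_PABC {a b : ℕ} (hab : a ≤ b) (hb : b ≤ n) : PABC ι n a ≤ PABC ι n b := by
  rw [PABC, PABC, if_pos (hab.trans hb), if_pos hb]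
  exact Finset.sum_le_sum_of_subset (Finset.Icc_subset_Icc_right hab)

theorem PABC_le_add_sub {a b : ℕ} (ha : 1 ≤ a) (hab : a ≤ b) (hb : b ≤ n) :
    PABC ι n b ≤ PABC ι n a + (b - a) := by
  induction b, hab using Nat.le_induction with
  | base => omega
  | succ b hab ih =>
    have := ih (by omega)
    have := pval_le_one ι (b + 1) b
    rw [PABC_succ (ha.trans hab) hb]
    omega

theorem sum_cartanA_smul {M : Type*} [AddCommGroup M] [Module ℚ M] {c : ℕ}
    (hc : 1 ≤ c ∧ c ≤ n) {f : ℕ → M} (hf : ∀ i, ¬ (1 ≤ i ∧ i ≤ n) → f i = 0) :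
    ∑ i ∈ (Finset.Icc 1 n).erase c, (cartanA n c i : ℚ) • f i = -f (c - 1) - f (c + 1) := by
  have hpair : ∑ i ∈ ({c - 1, c + 1} : Finset ℕ), -f i = -f (c - 1) - f (c + 1) := by
    rw [Finset.sum_pair (by omega), sub_eq_add_neg]
  rw [← hpair]
  refine Finset.sum_congr_of_eq_on_inter (fun i hi hni => ?_) (fun i hi hni => ?_)
    (fun i _ hi => ?_)
  · have : cartanA n c i = 0 := by grind [cartanA]
    rw [this, Int.cast_zero, zero_smul]
  · rw [hf i (by grind), neg_zero]
  · have : cartanA n c i = -1 := by grind [cartanA]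
    rw [this, Int.cast_neg, Int.cast_one, neg_one_smul]

theorem boxA_sub_boxA_succ (hadm : Admissible n ι) (hadap : Adapted n (cartanA n) ι) {c t : ℕ}
    (hc : 1 ≤ c ∧ c ≤ n) (ht : 0 < t) {m : ℤ} (hm : m + PABC ι n c = t) :
    boxA ι n m c - boxA ι n m (c + 1) = beta (cartanA n) ι (occPos ι c t) := by
  have hright : xsj ι n (m + PABC ι n (c + 1)) (c + 1) =
      xsj ι n (t + pval ι (c + 1) c) (c + 1) := by
    by_cases hcn : c + 1 ≤ n
    · rw [PABC_succ hc.1 hcn, Nat.cast_add, ← add_assoc, hm]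
    · rw [xsj_eq_zero_of_not_mem (by omega), xsj_eq_zero_of_not_mem (by omega)]
  have hleft : xsj ι n (m + PABC ι n (c - 1) + 1) (c - 1) =
      xsj ι n (t + pval ι (c - 1) c) (c - 1) := by
    obtain ⟨b, rfl⟩ : ∃ b, c = b + 1 := ⟨c - 1, by omega⟩
    rw [Nat.add_sub_cancel]
    rcases b.eq_zero_or_pos with rfl | hb
    · rw [xsj_eq_zero_of_not_mem (by omega), xsj_eq_zero_of_not_mem (by omega)]
    · have := pval_add_pval_swap (hadm.infinite_setOf_eq ⟨hb, by omega⟩)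
        (hadm.infinite_setOf_eq hc) b.lt_succ_self.ne
      have := PABC_succ (ι := ι) hb hc.2
      congr 1
      omega
  rw [beta_occPos hadm hadap hc ht,
    sum_cartanA_smul hc fun i hi => xsj_eq_zero_of_not_mem hi _]
  simp only [boxA, Nat.add_sub_cancel, hright, hleft, hm]
  abel

theorem Admissible.boxA_apply_occPos (hadm : Admissible n ι) (m : ℤ) (e : ℕ) {c t : ℕ}
    (hc : 1 ≤ c ∧ c ≤ n) (ht : 0 < t) :
    boxA ι n m e (occPos ι c t) =
      (if e = c ∧ m = t - PABC ι n c then 1 else 0) -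
        if e = c + 1 ∧ m = t - PABC ι n c - 1 then 1 else 0 := by
  rw [boxA, Pi.sub_apply, hadm.xsj_apply_occPos _ _ hc ht, hadm.xsj_apply_occPos _ _ hc ht]
  congr 2 <;> grind

end Boxes

section Tableaux

variable {n k : ℕ} {ι j : ℕ → ℕ} {s : ℤ}

/-- `[j_1,…,j_k]_s` contains the box `B_m(e)`, i.e. `j_q = e` for the row `q` with
`s + k - q = m`. -/
def HasBox (s : ℤ) (k : ℕ) (j : ℕ → ℕ) (m : ℤ) (e : ℕ) : Prop :=
  ∃ q ∈ Finset.Icc 1 k, j q = e ∧ s + k - q = m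

instance {m : ℤ} {e : ℕ} : Decidable (HasBox s k j m e) :=
  inferInstanceAs (Decidable (∃ q ∈ Finset.Icc 1 k, j q = e ∧ s + k - q = m))

theorem Admissible.tab_apply_occPos (hadm : Admissible n ι) (s : ℤ) (k : ℕ) (j : ℕ → ℕ)
    {c t : ℕ} (hc : 1 ≤ c ∧ c ≤ n) (ht : 0 < t) :
    tab (boxA ι n) s k j (occPos ι c t) =
      (if HasBox s k j (t - PABC ι n c) c then 1 else 0) -
        if HasBox s k j (t - PABC ι n c - 1) (c + 1) then 1 else 0 := by
  simp only [tab, Finset.sum_apply, hadm.boxA_apply_occPos _ _ hc ht, Finset.sum_sub_distrib]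
  rw [Finset.sum_ite_zero _ _ (by omega), Finset.sum_ite_zero _ _ (by omega)]
  rfl

theorem tab_update (box : ℤ → ℕ → ℕ → ℚ) (s : ℤ) (j : ℕ → ℕ) (c : ℕ) {q : ℕ}
    (hq : 1 ≤ q ∧ q ≤ k) :
    tab box s k (Function.update j q c) =
      tab box s k j - box (s + k - q) (j q) + box (s + k - q) c := by
  have hq' := Finset.mem_Icc.2 hq
  simp only [tab, Function.apply_update (fun i e => box (s + k - (i : ℕ)) e),
    Finset.sum_update_of_mem hq', Finset.sum_eq_add_sum_sdiff_singleton_of_mem hq'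
      (fun i => box (s + k - (i : ℕ)) (j i))]
  abel

theorem tab_boxA_id (ι : ℕ → ℕ) (n : ℕ) (s : ℤ) (k : ℕ) :
    tab (boxA ι n) s k id = xsj ι n (s + PABC ι n k) k := by
  let f (i : ℕ) := xsj ι n (s + k - i + PABC ι n i) i
  have telescope (r : ℕ) : ∑ i ∈ Finset.Icc 1 r, (f i - f (i - 1)) = f r := by
    induction r with
    | zero => exact (xsj_eq_zero_of_not_mem (by omega) _).symm
    | succ r ih => rw [Finset.sum_Icc_succ_top (by omega), ih, Nat.add_sub_cancel, add_sub_cancel]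
  have hf : f k = xsj ι n (s + PABC ι n k) k := by simp only [f, add_sub_cancel_right]
  rw [← hf, ← telescope, tab]
  refine Finset.sum_congr rfl fun i hi => ?_
  have := (Finset.mem_Icc.1 hi).1
  simp only [boxA, f, id]
  congr 2
  push_cast [this]
  ring

theorem Sop_of_apply_eq_zero {A : ℕ → ℕ → ℤ} {p : ℕ} {φ : ℕ → ℚ} (h : φ p = 0) :
    Sop A ι p φ = φ := by
  simp [Sop, h]

theorem Sop_of_apply_eq_one {A : ℕ → ℕ → ℤ} {p : ℕ} {φ : ℕ → ℚ} (h : φ p = 1) :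
    Sop A ι p φ = φ - beta A ι p := by
  simp [Sop, h]

theorem Sop_of_apply_eq_neg_one {A : ℕ → ℕ → ℤ} {p : ℕ} {φ : ℕ → ℚ} (h : φ p = -1) :
    Sop A ι p φ = φ + beta A ι (kminus ι p) := by
  simp [Sop, h, show ¬ (0 : ℚ) < -1 by norm_num]

theorem Sop_tab_raise (hadm : Admissible n ι) (hadap : Adapted n (cartanA n) ι) {q c t : ℕ}
    (hq : 1 ≤ q ∧ q ≤ k) (hc : 1 ≤ c ∧ c ≤ n) (hjq : j q = c)
    (hnext : q < k → j (q + 1) ≠ c + 1) (ht : 0 < t) (hm : s + k - q + PABC ι n c = t) :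
    Sop (cartanA n) ι (occPos ι c t) (tab (boxA ι n) s k j) =
      tab (boxA ι n) s k (Function.update j q (c + 1)) := by
  have hcoeff : tab (boxA ι n) s k j (occPos ι c t) = 1 := by
    have hbox : HasBox s k j (t - PABC ι n c) c := ⟨q, Finset.mem_Icc.2 hq, hjq, by omega⟩
    have hnbox : ¬ HasBox s k j (t - PABC ι n c - 1) (c + 1) := by
      rintro ⟨r, hr, hjr, hrow⟩
      obtain rfl : r = q + 1 := by omega
      exact hnext (Finset.mem_Icc.1 hr).2 hjr
    rw [hadm.tab_apply_occPos s k j hc ht, if_pos hbox, if_neg hnbox, sub_zero]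
  rw [Sop_of_apply_eq_one hcoeff, tab_update _ _ _ _ hq, hjq,
    ← boxA_sub_boxA_succ hadm hadap hc ht hm]
  abel

theorem Sop_tab_lower (hadm : Admissible n ι) (hadap : Adapted n (cartanA n) ι) {q c t : ℕ}
    (hq : 1 ≤ q ∧ q ≤ k) (hc : 1 ≤ c ∧ c ≤ n) (hjq : j q = c + 1)
    (hprev : 1 < q → j (q - 1) ≠ c) (ht : 0 < t) (hm : s + k - q + PABC ι n c = t) :
    Sop (cartanA n) ι (occPos ι c (t + 1)) (tab (boxA ι n) s k j) =
      tab (boxA ι n) s k (Function.update j q c) := by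
  have hcoeff : tab (boxA ι n) s k j (occPos ι c (t + 1)) = -1 := by
    have hnbox : ¬ HasBox s k j ((t + 1 : ℕ) - PABC ι n c) c := by
      rintro ⟨r, hr, hjr, hrow⟩
      obtain rfl : r = q - 1 := by omega
      have := Finset.mem_Icc.1 hr
      exact hprev (by omega) hjr
    have hbox : HasBox s k j ((t + 1 : ℕ) - PABC ι n c - 1) (c + 1) :=
      ⟨q, Finset.mem_Icc.2 hq, hjq, by omega⟩
    rw [hadm.tab_apply_occPos s k j hc t.succ_pos, if_neg hnbox, if_pos hbox, zero_sub]
  rw [Sop_of_apply_eq_neg_one hcoeff, kminus_occPos (hadm.infinite_setOf_eq hc),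
    tab_update _ _ _ _ hq, hjq, ← boxA_sub_boxA_succ hadm hadap hc ht hm]
  abel
/-- `j_1 < ⋯ < j_k` are entries in `{1,…,n+1}`: the column condition in the definition of
`Tab_{A,ι}`. Values of `j` outside `{1,…,k}` are unconstrained. -/
structure IsColumn (n k : ℕ) (j : ℕ → ℕ) : Prop where
  mem : ∀ i, 1 ≤ i → i ≤ k → 1 ≤ j i ∧ j i ≤ n + 1
  lt_succ : ∀ i, 1 ≤ i → i < k → j i < j (i + 1)

theorem mem_TabA_iff {φ : ℕ → ℚ} :
    φ ∈ TabA ι n ↔ ∃ k s j, (1 ≤ k ∧ k ≤ n) ∧ IsColumn n k j ∧ 1 - (PABC ι n k : ℤ) ≤ s ∧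
      φ = tab (boxA ι n) s k j :=
  ⟨fun ⟨k, s, j, hk, hkn, hmem, hlt, hs, hφ⟩ => ⟨k, s, j, ⟨hk, hkn⟩, ⟨hmem, hlt⟩, hs, hφ⟩,
    fun ⟨k, s, j, hk, hj, hs, hφ⟩ => ⟨k, s, j, hk.1, hk.2, hj.mem, hj.lt_succ, hs, hφ⟩⟩

theorem isColumn_id (hk : k ≤ n + 1) : IsColumn n k id :=
  ⟨fun _ hi hik => ⟨hi, hik.trans hk⟩, fun i _ _ => i.lt_succ_self⟩

theorem IsColumn.update (hj : IsColumn n k j) {q c : ℕ} (hc : 1 ≤ c ∧ c ≤ n + 1)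
    (hprev : 1 < q → j (q - 1) < c) (hnext : q < k → c < j (q + 1)) :
    IsColumn n k (Function.update j q c) where
  mem i hi hik := by
    rcases eq_or_ne i q with rfl | hiq
    · rwa [Function.update_self]
    · rw [Function.update_of_ne hiq]
      exact hj.mem i hi hik
  lt_succ i hi hik := by
    rcases eq_or_ne i q with rfl | hiq
    · rw [Function.update_self, Function.update_of_ne (by omega)]
      exact hnext hik
    · rcases eq_or_ne (i + 1) q with rfl | hiq'
      · rw [Function.update_self, Function.update_of_ne hiq]
        exact hprev (by omega)
      · rw [Function.update_of_ne hiq, Function.update_of_ne hiq']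
        exact hj.lt_succ i hi hik

theorem IsColumn.update_succ (hj : IsColumn n k j) {q c : ℕ} (hq : 1 ≤ q ∧ q ≤ k) (hjq : j q = c)
    (hc : c ≤ n) (hnext : q < k → j (q + 1) ≠ c + 1) :
    IsColumn n k (Function.update j q (c + 1)) := by
  refine hj.update (by omega) (fun h => ?_) (fun h => ?_)
  · have := hj.lt_succ (q - 1) (by omega) (by omega)
    rw [Nat.sub_add_cancel hq.1] at this
    omega
  · have := hj.lt_succ q hq.1 h
    have := hnext h
    omega

theorem IsColumn.update_pred (hj : IsColumn n k j) {q c : ℕ} (hq : 1 ≤ q ∧ q ≤ k)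
    (hjq : j q = c + 1) (hc : 1 ≤ c) (hprev : 1 < q → j (q - 1) ≠ c) :
    IsColumn n k (Function.update j q c) := by
  have := hj.mem q hq.1 hq.2
  refine hj.update (by omega) (fun h => ?_) (fun h => ?_)
  · have := hj.lt_succ (q - 1) (by omega) (by omega)
    rw [Nat.sub_add_cancel hq.1] at this
    have := hprev h
    omega
  · have := hj.lt_succ q hq.1 h
    omega

theorem IsColumn.exists_lowerable (hj : IsColumn n k j) (hne : ∃ i, 1 ≤ i ∧ i ≤ k ∧ j i ≠ i) :
    ∃ q c, (1 ≤ q ∧ q ≤ k) ∧ q ≤ c ∧ j q = c + 1 ∧ (1 < q → j (q - 1) ≠ c) := by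
  by_contra! hnone
  obtain ⟨i, hi, hik, hji⟩ := hne
  refine hji ?_
  clear hji
  induction i, hi using Nat.le_induction with
  | base =>
    by_contra hj1
    have := hj.mem 1 le_rfl hik
    have := hnone 1 (j 1 - 1) ⟨le_rfl, hik⟩ (by omega) (by omega)
    omega
  | succ i hi ih =>
    by_contra hji
    have hij := ih (by omega)
    have := hj.lt_succ i hi hik
    have := hnone (i + 1) (j (i + 1) - 1) ⟨by omega, hik⟩ (by omega) (by omega)
    rw [Nat.add_sub_cancel] at this
    omega

theorem xc_mem_TabA (hadm : Admissible n ι) {p : ℕ} (hp : 0 < p) : xc p ∈ TabA ι n := by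
  obtain ⟨i, t, hi, ht, rfl⟩ := hadm.exists_mem_occPos_eq hp
  refine mem_TabA_iff.2 ⟨i, t - PABC ι n i, id, hi, isColumn_id (by omega), by omega, ?_⟩
  rw [tab_boxA_id, sub_add_cancel, xsj_natCast hi ht]

theorem Sop_mem_TabA (hadm : Admissible n ι) (hadap : Adapted n (cartanA n) ι) {p : ℕ}
    (hp : 0 < p) {φ : ℕ → ℚ} (hφ : φ ∈ TabA ι n) : Sop (cartanA n) ι p φ ∈ TabA ι n := by
  have hφ' := hφ
  obtain ⟨k, s, j, hk, hj, hs, rfl⟩ := mem_TabA_iff.1 hφ'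
  obtain ⟨c, t, hc, ht, rfl⟩ := hadm.exists_mem_occPos_eq hp
  have hcoeff := hadm.tab_apply_occPos s k j hc ht
  by_cases hbox : HasBox s k j (t - PABC ι n c) c <;>
    by_cases hbox' : HasBox s k j (t - PABC ι n c - 1) (c + 1)
  · rw [if_pos hbox, if_pos hbox', sub_self] at hcoeff
    rwa [Sop_of_apply_eq_zero hcoeff]
  · obtain ⟨q, hq, hjq, hrow⟩ := hbox
    rw [Finset.mem_Icc] at hq
    have hnext (hqk : q < k) : j (q + 1) ≠ c + 1 := fun hjq' =>
      hbox' ⟨q + 1, Finset.mem_Icc.2 (by omega), hjq', by omega⟩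
    rw [Sop_tab_raise hadm hadap hq hc hjq hnext ht (by omega)]
    exact mem_TabA_iff.2 ⟨k, s, _, hk, hj.update_succ hq hjq hc.2 hnext, hs, rfl⟩
  · rcases (Nat.succ_le_of_lt ht).eq_or_lt with rfl | ht1
    · rw [if_neg hbox, if_pos hbox', zero_sub] at hcoeff
      rw [Sop_of_apply_eq_neg_one hcoeff, kminus_occPos (hadm.infinite_setOf_eq hc)]
      simpa [occPos, beta] using hφ
    obtain ⟨t, rfl⟩ := Nat.exists_eq_succ_of_ne_zero ht.ne'
    obtain ⟨q, hq, hjq, hrow⟩ := hbox'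
    rw [Finset.mem_Icc] at hq
    have hprev (hq1 : 1 < q) : j (q - 1) ≠ c := fun hjq' =>
      hbox ⟨q - 1, Finset.mem_Icc.2 (by omega), hjq', by omega⟩
    rw [Sop_tab_lower hadm hadap hq hc hjq hprev (by omega) (by omega)]
    exact mem_TabA_iff.2 ⟨k, s, _, hk, hj.update_pred hq hjq hc.1 hprev, hs, rfl⟩
  · rw [if_neg hbox, if_neg hbox', sub_self] at hcoeff
    rwa [Sop_of_apply_eq_zero hcoeff]

theorem sum_update_lt {q c : ℕ} (hq : 1 ≤ q ∧ q ≤ k) (hc : c < j q) :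
    ∑ i ∈ Finset.Icc 1 k, Function.update j q c i < ∑ i ∈ Finset.Icc 1 k, j i := by
  refine Finset.sum_lt_sum (fun i _ => ?_) ⟨q, Finset.mem_Icc.2 hq, by rwa [Function.update_self]⟩
  exact update_le_self_iff.2 hc.le i

theorem IsColumn.tab_mem_Xi (hj : IsColumn n k j) (hadm : Admissible n ι)
    (hadap : Adapted n (cartanA n) ι) (hk : 1 ≤ k ∧ k ≤ n) (hs : 1 - (PABC ι n k : ℤ) ≤ s) :
    tab (boxA ι n) s k j ∈ Xi (cartanA n) ι := by
  induction hN : ∑ i ∈ Finset.Icc 1 k, j i using Nat.strong_induction_on generalizing j with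
  | _ N ih =>
    by_cases hid : ∀ i, 1 ≤ i → i ≤ k → j i = i
    · have htab : tab (boxA ι n) s k j = tab (boxA ι n) s k id :=
        Finset.sum_congr rfl fun i hi => by
          rw [hid i (Finset.mem_Icc.1 hi).1 (Finset.mem_Icc.1 hi).2, id]
      rw [htab, tab_boxA_id, xsj, if_pos ⟨by omega, hk⟩]
      exact XiMem.base _ (occPos_pos (hadm.infinite_setOf_eq hk) (by omega))
    · push Not at hid
      obtain ⟨q, c, hq, hqc, hjq, hprev⟩ := hj.exists_lowerable hid
      have := hj.mem q hq.1 hq.2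
      have hc : 1 ≤ c ∧ c ≤ n := by omega
      have hlowered := ih _ (hN ▸ sum_update_lt hq (by omega))
        (hj.update_pred hq hjq hc.1 hprev) rfl
      have := PABC_le_add_sub (ι := ι) hq.1 hq.2 hk.2
      have := PABC_le_PABC (ι := ι) hqc hc.2
      obtain ⟨t, ht⟩ : ∃ t : ℕ, s + k - q + PABC ι n c = t := Int.eq_ofNat_of_zero_le (by omega)
      have ht0 : 0 < t := by omega
      have hnext (hqk : q < k) : Function.update j q c (q + 1) ≠ c + 1 := by
        rw [Function.update_of_ne (by omega), ← hjq]
        exact (hj.lt_succ q hq.1 hqk).ne'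
      have hraised := XiMem.step _ (occPos_pos (hadm.infinite_setOf_eq hc) ht0) _ hlowered
      rwa [Sop_tab_raise hadm hadap hq hc (Function.update_self ..) hnext ht0 ht,
        Function.update_idem, ← hjq, Function.update_eq_self] at hraised

end Tableaux

/-- Theorem 3.5 (type A): for an adapted sequence, `Ξ_ι = Tab_{A,ι}`. -/
theorem XiEqTabA (n : ℕ) (hn : 2 ≤ n) (ι : ℕ → ℕ)
    (hadm : Admissible n ι) (hadap : Adapted n (cartanA n) ι) :
    Xi (cartanA n) ι = TabA ι n := by
  refine Set.Subset.antisymm (fun φ (hφ : XiMem (cartanA n) ι φ) => ?_) fun φ hφ => ?_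
  · induction hφ with
    | base k hk => exact xc_mem_TabA hadm hk
    | step k hk φ _ ih => exact Sop_mem_TabA hadm hadap hk ih
  · obtain ⟨k, s, j, hk, hj, hs, rfl⟩ := mem_TabA_iff.1 hφ
    exact hj.tab_mem_Xi hadm hadap hk hs
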